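/- For every λ > 0, r > 0 and α > 1, the BNB score has mean zero under the beta negative binomial distribution: ∑_{y=0}^{∞} s(y, λ) · p(y; λ, r, α) = 0. -/

import Mathlib

noncomputable def betaFn (a b : ℝ) : ℝ := Real.Gamma a * Real.Gamma b / Real.Gamma (a + b)

noncomputable def bnbPmf (lam r a : ℝ) (y : ℕ) : ℝ :=
  Real.Gamma ((y : ℝ) + r) / (Real.Gamma ((y : ℝ) + 1) * Real.Gamma r) *
    (betaFn (a + r) ((a - 1) * lam / r + (y : ℝ)) / betaFn a ((a - 1) * lam / r))

noncomputable def digamma (x : ℝ) : ℝ := deriv (fun t => Real.log (Real.Gamma t)) x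

noncomputable def bnbScore (r a lam y : ℝ) : ℝ :=
  ((a - 1) / r) * lam *
    (digamma (((a - 1) / r) * lam + y) + digamma (((a - 1) / r) * lam + a) -
      digamma (((a - 1) / r) * lam + y + a + r) - digamma (((a - 1) / r) * lam))

open MeasureTheory Set

/-- The negative binomial series, with coefficients written in terms of the Gamma function. -/
theorem hasSum_negBinomial {r t : ℝ} (hr : 0 < r) (ht : |t| < 1) :
    HasSum (fun y : ℕ => Real.Gamma ((y : ℝ) + r) / (Real.Gamma ((y : ℝ) + 1) * Real.Gamma r) *
      t ^ y) (1 / (1 - t) ^ r) := by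
  have hmem : t ∈ Metric.eball (0 : ℝ) 1 := by
    simpa [Metric.mem_eball, edist_dist, ← ENNReal.ofReal_one, ENNReal.ofReal_lt_ofReal_iff]
      using ht
  have h := (Real.one_div_one_sub_rpow_hasFPowerSeriesOnBall_zero r).hasSum hmem
  rw [zero_add] at h
  refine h.congr_fun ?_
  intro y
  have hG : Real.Gamma ((y : ℝ) + r) = (ascPochhammer ℝ y).eval r * Real.Gamma r := by
    induction y with
    | zero => simp
    | succ n ih =>
      have : ((n + 1 : ℕ) : ℝ) + r = (n + r) + 1 := by push_cast; ring
      rw [this, Real.Gamma_add_one (by positivity), ih, ascPochhammer_succ_eval]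
      ring
  have hc : (y.factorial : ℝ) * Ring.choose (r + y - 1) y = (ascPochhammer ℝ y).eval r := by
    rw [← Ring.multichoose_eq, ← nsmul_eq_mul, Ring.factorial_nsmul_multichoose_eq_ascPochhammer,
      Polynomial.ascPochhammer_smeval_eq_eval]
  have hΓ := (Real.Gamma_pos_of_pos hr).ne'
  have hf : (y.factorial : ℝ) ≠ 0 := by positivity
  rw [FormalMultilinearSeries.ofScalars_apply_eq, hG, ← hc, Real.Gamma_nat_eq_factorial,
    smul_eq_mul]
  field_simp

theorem integrableOn_rpow_mul_one_sub_rpow {u v : ℝ} (hu : 0 < u) (hv : 0 < v) :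
    IntegrableOn (fun t : ℝ => t ^ (u - 1) * (1 - t) ^ (v - 1)) (Ioo 0 1) := by
  have h := (Complex.betaIntegral_convergent (u := u) (v := v) (by simpa) (by simpa))
  rw [intervalIntegrable_iff_integrableOn_Ioo_of_le zero_le_one] at h
  refine (Integrable.re h).congr ?_
  filter_upwards [ae_restrict_mem measurableSet_Ioo] with x ⟨hx0, hx1⟩
  norm_cast
  rw [← Complex.ofReal_cpow hx0.le, ← Complex.ofReal_cpow (by linarith)]
  norm_cast

theorem betaFn_eq_integral {u v : ℝ} (hu : 0 < u) (hv : 0 < v) :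
    betaFn u v = ∫ t in Ioo (0 : ℝ) 1, t ^ (v - 1) * (1 - t) ^ (u - 1) := by
  have hsymm : betaFn u v = ProbabilityTheory.beta v u := by
    rw [betaFn, ProbabilityTheory.beta, add_comm, mul_comm]
  have h := (Complex.betaIntegral_convergent (u := v) (v := u) (by simpa) (by simpa))
  rw [intervalIntegrable_iff_integrableOn_Ioo_of_le zero_le_one] at h
  rw [hsymm, ProbabilityTheory.beta_eq_betaIntegralReal v u hv hu, Complex.betaIntegral,
    intervalIntegral.integral_of_le zero_le_one, integral_Ioc_eq_integral_Ioo,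
    ← RCLike.re_to_complex, ← integral_re h]
  refine setIntegral_congr_fun measurableSet_Ioo fun x ⟨hx0, hx1⟩ => ?_
  norm_cast
  rw [← Complex.ofReal_cpow hx0.le, ← Complex.ofReal_cpow (by linarith)]
  norm_cast

theorem betaFn_pos {u v : ℝ} (hu : 0 < u) (hv : 0 < v) : 0 < betaFn u v :=
  ProbabilityTheory.beta_pos hu hv

/-- Total mass of the beta negative binomial distribution, before normalization. -/
theorem hasSum_negBinomial_mul_betaFn {r a b : ℝ} (hr : 0 < r) (ha : 0 < a) (hb : 0 < b) :
    HasSum (fun y : ℕ => Real.Gamma ((y : ℝ) + r) / (Real.Gamma ((y : ℝ) + 1) * Real.Gamma r) *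
      betaFn (a + r) (b + y)) (betaFn a b) := by
  set c : ℕ → ℝ := fun y =>
    Real.Gamma ((y : ℝ) + r) / (Real.Gamma ((y : ℝ) + 1) * Real.Gamma r)
  have hc0 (y : ℕ) : 0 ≤ c y :=
    div_nonneg (Real.Gamma_pos_of_pos (by positivity)).le
      (mul_pos (Real.Gamma_pos_of_pos (by positivity)) (Real.Gamma_pos_of_pos hr)).le
  set F : ℕ → ℝ → ℝ := fun y t => c y * (t ^ (b + y - 1) * (1 - t) ^ (a + r - 1)) with hF
  have hsum (t : ℝ) (ht : t ∈ Ioo (0 : ℝ) 1) :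
      HasSum (fun y => F y t) (t ^ (b - 1) * (1 - t) ^ (a - 1)) := by
    obtain ⟨ht0, ht1⟩ := ht
    have h := (hasSum_negBinomial hr (t := t) (by rw [abs_lt]; constructor <;> linarith)).mul_left
      (t ^ (b - 1) * (1 - t) ^ (a + r - 1))
    have h1 : (0 : ℝ) < 1 - t := by linarith
    have hval : t ^ (b - 1) * (1 - t) ^ (a + r - 1) * (1 / (1 - t) ^ r) =
        t ^ (b - 1) * (1 - t) ^ (a - 1) := by
      rw [show a + r - 1 = (a - 1) + r by ring, Real.rpow_add h1]
      have := (Real.rpow_pos_of_pos h1 r).ne'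
      field_simp
    rw [hval] at h
    refine h.congr_fun fun y => ?_
    simp only [hF]
    rw [show b + y - 1 = (b - 1) + y by ring, Real.rpow_add_natCast ht0.ne']
    ring
  have key := hasSum_integral_of_dominated_convergence (μ := volume.restrict (Ioo (0 : ℝ) 1))
    (F := F) (f := fun t => t ^ (b - 1) * (1 - t) ^ (a - 1)) F
    (fun y => by
      apply Measurable.aestronglyMeasurable
      fun_prop)
    (fun y => by
      filter_upwards [ae_restrict_mem measurableSet_Ioo] with t ⟨ht0, ht1⟩
      have h1 : (0 : ℝ) < 1 - t := by linarith
      rw [Real.norm_of_nonneg]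
      exact mul_nonneg (hc0 y) (by positivity))
    (by
      filter_upwards [ae_restrict_mem measurableSet_Ioo] with t ht using (hsum t ht).summable)
    (by
      refine (integrableOn_rpow_mul_one_sub_rpow hb ha).congr ?_
      filter_upwards [ae_restrict_mem measurableSet_Ioo] with t ht using (hsum t ht).tsum_eq.symm)
    (by
      filter_upwards [ae_restrict_mem measurableSet_Ioo] with t ht using hsum t ht)
  rw [← betaFn_eq_integral ha hb] at key
  refine key.congr_fun fun y => ?_
  rw [hF, integral_const_mul, ← betaFn_eq_integral (by positivity) (by positivity)]

theorem differentiableAt_log_Gamma {x : ℝ} (hx : 0 < x) :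
    DifferentiableAt ℝ (fun t => Real.log (Real.Gamma t)) x :=
  (Real.differentiableOn_Gamma_Ioi.differentiableAt (Ioi_mem_nhds hx)).log
    (Real.Gamma_pos_of_pos hx).ne'

theorem hasDerivAt_Gamma_digamma {x : ℝ} (hx : 0 < x) :
    HasDerivAt Real.Gamma (Real.Gamma x * digamma x) x := by
  have hd := Real.differentiableOn_Gamma_Ioi.differentiableAt (Ioi_mem_nhds hx)
  have hΓ := (Real.Gamma_pos_of_pos hx).ne'
  have h : digamma x = deriv Real.Gamma x / Real.Gamma x := (hd.hasDerivAt.log hΓ).deriv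
  rw [h, mul_div_cancel₀ _ hΓ]
  exact hd.hasDerivAt

theorem digamma_monotoneOn : MonotoneOn digamma (Ioi 0) :=
  Real.convexOn_log_Gamma.monotoneOn_deriv fun _ hx => differentiableAt_log_Gamma hx

theorem digamma_add_one {x : ℝ} (hx : 0 < x) : digamma (x + 1) = digamma x + 1 / x := by
  have h1 : HasDerivAt (fun t => Real.log (Real.Gamma (t + 1))) (digamma (x + 1)) x :=
    (differentiableAt_log_Gamma (by positivity : 0 < x + 1)).hasDerivAt.comp_add_const x 1
  have h2 : HasDerivAt (fun t => Real.log (Real.Gamma t) + Real.log t) (digamma x + 1 / x) x := by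
    rw [one_div]
    exact (differentiableAt_log_Gamma hx).hasDerivAt.add (Real.hasDerivAt_log hx.ne')
  refine h1.unique (h2.congr_of_eventuallyEq ?_)
  filter_upwards [Ioi_mem_nhds hx] with t ht
  have ht : 0 < t := ht
  rw [Real.Gamma_add_one ht.ne', Real.log_mul ht.ne' (Real.Gamma_pos_of_pos ht).ne', add_comm]

theorem digamma_add_natCast_sub_le {x : ℝ} (hx : 0 < x) (n : ℕ) :
    digamma (x + n) - digamma x ≤ n / x := by
  induction n with
  | zero => simp
  | succ n ih =>
    have h := digamma_add_one (by positivity : 0 < x + n)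
    have hle : 1 / (x + n) ≤ 1 / x :=
      one_div_le_one_div_of_le hx (by linarith [n.cast_nonneg (α := ℝ)])
    rw [show x + ((n + 1 : ℕ) : ℝ) = x + n + 1 by push_cast; ring, h,
      show ((n + 1 : ℕ) : ℝ) / x = n / x + 1 / x by push_cast; ring]
    linarith

theorem abs_digamma_sub_digamma_add_le {c x₀ x : ℝ} (hc : 0 ≤ c) (hx₀ : 0 < x₀) (hx : x₀ ≤ x) :
    |digamma x - digamma (c + x)| ≤ ⌈c⌉₊ / x₀ := by
  have hx' : 0 < x := hx₀.trans_le hx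
  have hle : digamma x ≤ digamma (c + x) :=
    digamma_monotoneOn hx' (by positivity : 0 < c + x) (by linarith)
  have hle' : digamma (c + x) ≤ digamma (x + ⌈c⌉₊) :=
    digamma_monotoneOn (by positivity : 0 < c + x) (by positivity : 0 < x + ⌈c⌉₊)
      (by linarith [Nat.le_ceil c])
  have hn := digamma_add_natCast_sub_le hx' ⌈c⌉₊
  have hdiv : (⌈c⌉₊ : ℝ) / x ≤ ⌈c⌉₊ / x₀ := by gcongr
  rw [abs_sub_comm, abs_of_nonneg (by linarith)]
  linarith

theorem hasDerivAt_betaFn {c x : ℝ} (hc : 0 < c) (hx : 0 < x) :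
    HasDerivAt (betaFn c) (betaFn c x * (digamma x - digamma (c + x))) x := by
  have hcx : 0 < c + x := by positivity
  have hΓ := (Real.Gamma_pos_of_pos hcx).ne'
  have h1 := (hasDerivAt_Gamma_digamma hx).const_mul (Real.Gamma c)
  have h2 := (hasDerivAt_Gamma_digamma hcx).comp_const_add c x
  refine (h1.div h2 hΓ).congr_deriv ?_
  rw [betaFn]
  field_simp

theorem betaFn_antitoneOn {c : ℝ} (hc : 0 < c) : AntitoneOn (betaFn c) (Ioi 0) := by
  refine antitoneOn_of_deriv_nonpos (convex_Ioi 0)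
    (fun x hx => (hasDerivAt_betaFn hc hx).continuousAt.continuousWithinAt) ?_ ?_ <;>
    rw [interior_Ioi] <;> intro x (hx : 0 < x)
  · exact (hasDerivAt_betaFn hc hx).differentiableAt.differentiableWithinAt
  · rw [(hasDerivAt_betaFn hc hx).deriv]
    have := digamma_monotoneOn hx (by positivity : 0 < c + x) (by linarith)
    exact mul_nonpos_of_nonneg_of_nonpos (betaFn_pos hc hx).le (by linarith)

/-- Termwise differentiation in `b` of the series for the total mass. -/
theorem hasSum_negBinomial_mul_betaFn_mul_digamma {r a b : ℝ} (hr : 0 < r) (ha : 0 < a)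
    (hb : 0 < b) :
    HasSum (fun y : ℕ => Real.Gamma ((y : ℝ) + r) / (Real.Gamma ((y : ℝ) + 1) * Real.Gamma r) *
      (betaFn (a + r) (b + y) * (digamma (b + y) - digamma (a + r + (b + y)))))
      (betaFn a b * (digamma b - digamma (a + b))) := by
  set c : ℕ → ℝ := fun y =>
    Real.Gamma ((y : ℝ) + r) / (Real.Gamma ((y : ℝ) + 1) * Real.Gamma r)
  have hc0 (y : ℕ) : 0 ≤ c y :=
    div_nonneg (Real.Gamma_pos_of_pos (by positivity)).le
      (mul_pos (Real.Gamma_pos_of_pos (by positivity)) (Real.Gamma_pos_of_pos hr)).le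
  have har : 0 < a + r := by positivity
  have hb2 : 0 < b / 2 := by positivity
  have hbmem : b ∈ Ioi (b / 2) := by simp [hb]
  let u : ℕ → ℝ := fun y => c y * betaFn (a + r) (b / 2 + y) * (⌈a + r⌉₊ / (b / 2))
  have hu : Summable u := (hasSum_negBinomial_mul_betaFn hr ha hb2).summable.mul_right _
  have hg (y : ℕ) (x : ℝ) (hx : x ∈ Ioi (b / 2)) :
      HasDerivAt (fun x => c y * betaFn (a + r) (x + y))
        (c y * (betaFn (a + r) (x + y) * (digamma (x + y) - digamma (a + r + (x + y))))) x := by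
    have hx : 0 < x := hb2.trans hx
    exact ((hasDerivAt_betaFn har (by positivity : 0 < x + y)).comp_add_const x y).const_mul _
  have hbound (y : ℕ) (x : ℝ) (hx : x ∈ Ioi (b / 2)) :
      ‖c y * (betaFn (a + r) (x + y) * (digamma (x + y) - digamma (a + r + (x + y))))‖ ≤ u y := by
    have hx : b / 2 < x := hx
    have hx0 : 0 < x := hb2.trans hx
    have hy : (0 : ℝ) ≤ y := y.cast_nonneg
    have hxy : 0 < x + y := by positivity
    rw [norm_mul, norm_mul, Real.norm_of_nonneg (hc0 y),
      Real.norm_of_nonneg (betaFn_pos har hxy).le, ← mul_assoc]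
    refine mul_le_mul (mul_le_mul_of_nonneg_left ?_ (hc0 y)) ?_ (norm_nonneg _)
      (mul_nonneg (hc0 y) (betaFn_pos har (by positivity)).le)
    · exact betaFn_antitoneOn har (by positivity : 0 < b / 2 + y) hxy (by linarith)
    · exact abs_digamma_sub_digamma_add_le har.le hb2 (by linarith)
  have hderiv := hasDerivAt_tsum_of_isPreconnected hu isOpen_Ioi isPreconnected_Ioi hg hbound hbmem
    (hasSum_negBinomial_mul_betaFn hr ha hb).summable hbmem
  have heq : betaFn a =ᶠ[nhds b] fun x => ∑' y : ℕ, c y * betaFn (a + r) (x + y) := by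
    filter_upwards [Ioi_mem_nhds hb] with x hx
    exact (hasSum_negBinomial_mul_betaFn hr ha hx).tsum_eq.symm
  rw [(hasDerivAt_betaFn ha hb).unique (hderiv.congr_of_eventuallyEq heq)]
  exact (Summable.of_norm_bounded hu fun y => hbound y b hbmem).hasSum

theorem bnb_score_mean_zero (lam r a : ℝ) (hlam : 0 < lam) (hr : 0 < r) (ha : 1 < a) :
    ∑' y : ℕ, bnbScore r a lam (y : ℝ) * bnbPmf lam r a y = 0 := by
  have ha0 : 0 < a := by linarith
  set b : ℝ := (a - 1) / r * lam with hb_def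
  have hb : 0 < b := mul_pos (div_pos (by linarith) hr) hlam
  have hpmf : (a - 1) * lam / r = b := by rw [hb_def]; ring
  have hsum := ((hasSum_negBinomial_mul_betaFn_mul_digamma hr ha0 hb).add
    ((hasSum_negBinomial_mul_betaFn hr ha0 hb).mul_left
      (digamma (a + b) - digamma b))).mul_left (b / betaFn a b)
  rw [show betaFn a b * (digamma b - digamma (a + b)) + (digamma (a + b) - digamma b) * betaFn a b
    = 0 by ring, mul_zero] at hsum
  rw [← hsum.tsum_eq]
  refine tsum_congr fun y => ?_
  rw [bnbScore, bnbPmf, hpmf, ← hb_def, add_comm b a,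
    show b + (y : ℝ) + a + r = a + r + (b + y) by ring]
  ring
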